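/- arXiv:1004.2605 — 5 statements merged into one kernel-verified Lean document; each statement's English description precedes it below -/
import Mathlib

section
/- For any integers s ≥ 1 and k with 4s ≤ k, the binomial coefficients satisfy C(k−s, s) + C(k−s−1, s−1) ≤ 2·C(k−s−1, s). -/
/-!
By Pascal's rule the inequality amounts to `2 * C(k-s-1, s-1) ≤ C(k-s-1, s)`. The ratio of these two
consecutive binomial coefficients is `(k - 2 * s) / s`, which is at least `2` exactly when
`4 * s ≤ k`.
-/

theorem mul_choose_le_choose_succ {c n r : ℕ} (h : c * (r + 1) ≤ n - r) :
    c * n.choose r ≤ n.choose (r + 1) := by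
  refine Nat.le_of_mul_le_mul_right ?_ r.succ_pos
  calc c * n.choose r * (r + 1) = n.choose r * (c * (r + 1)) := by ring
    _ ≤ n.choose r * (n - r) := Nat.mul_le_mul_left _ h
    _ = n.choose (r + 1) * (r + 1) := (Nat.choose_succ_right_eq n r).symm

theorem stmt_3 (s k : ℕ) (hs : 1 ≤ s) (hk : 4 * s ≤ k) :
    Nat.choose (k - s) s + Nat.choose (k - s - 1) (s - 1) ≤
      2 * Nat.choose (k - s - 1) s := by
  have pascal : (k - s).choose s = (k - s - 1).choose (s - 1) + (k - s - 1).choose s :=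
    Nat.choose_eq_choose_pred_add (by omega) hs
  have two_mul_le : 2 * (k - s - 1).choose (s - 1) ≤ (k - s - 1).choose s := by
    simpa only [Nat.sub_add_cancel hs] using
      mul_choose_le_choose_succ (c := 2) (n := k - s - 1) (r := s - 1) (by omega)
  linarith
end

section
/- For any real α with 0 < α ≤ 1, the sum ∑_{d=2}^{k−1} α^d · M(d,k), viewed as a function of the integer k > 2, has asymptotic growth rate Θ( ((1 + √(1 + 4α²))/2)^k ) as k → ∞; that is, there exist constants c₁, c₂ > 0 such that the sum lies between c₁·((1+√(1+4α²))/2)^k and c₂·((1+√(1+4α²))/2)^k for all sufficiently large k. -/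
/-- McMullen's upper bound `M(d,k)`, defined for integers `2 ≤ d < k` as
`C(k − ⌊(d+1)/2⌋, k − d) + C(k − ⌊(d+2)/2⌋, k − d)`.  Note that `Nat.choose`
already implements the convention `C(a,b) = 0` unless `0 ≤ b ≤ a`. -/
def mcmullen (d k : ℕ) : ℕ :=
  Nat.choose (k - (d + 1) / 2) (k - d) + Nat.choose (k - (d + 2) / 2) (k - d)

/-!
Over all `0 ≤ d ≤ k` the sum `S k = ∑ α ^ d * M(d, k)` satisfies, by Pascal's rule, the linear
recurrence `S (k + 2) = S (k + 1) + α ^ 2 * S k`. Its characteristic roots are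
`φ = (1 + s) / 2` and `ψ = (1 - s) / 2` with `s = √(1 + 4 * α ^ 2)`, and solving it gives
`S k = (1 + 2 * α / s) * φ ^ k + (1 - 2 * α / s) * ψ ^ k`. The terms with `d` equal to `0`, `1` or
`k` contribute only `1 + 2 * α + 2 * α ^ k`. Since `1`, `|α|` and `|ψ|` are all smaller than `φ`,
the sum over `2 ≤ d < k` is asymptotic to `(1 + 2 * α / s) * φ ^ k`, and `2 * |α| < s` makes the
constant positive.
-/

open Asymptotics Filter Finset

theorem mcmullen_self (k : ℕ) : mcmullen k k = 2 := by
  simp [mcmullen]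

theorem mcmullen_zero_succ (k : ℕ) : mcmullen 0 (k + 1) = 1 := by
  simp [mcmullen]

theorem mcmullen_one_succ (k : ℕ) : mcmullen 1 (k + 1) = 2 := by
  simp [mcmullen]

theorem mcmullen_add_two_add_two {d k : ℕ} (h : d < k) :
    mcmullen (d + 2) (k + 2) = mcmullen (d + 2) (k + 1) + mcmullen d k := by
  have htop : k + 2 - (d + 2) = k - d - 1 + 1 := by omega
  have hbot : k - d = k - d - 1 + 1 := by omega
  have hlow : k + 1 - (d + 2) = k - d - 1 := by omega
  have hpascal (a : ℕ) (ha : a ≤ k) :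
      (k + 2 - (a + 1)).choose (k + 2 - (d + 2)) =
        (k + 1 - (a + 1)).choose (k + 1 - (d + 2)) + (k - a).choose (k - d) := by
    rw [show k + 2 - (a + 1) = k - a + 1 by omega, show k + 1 - (a + 1) = k - a by omega,
      htop, hlow, Nat.choose_succ_succ', ← hbot]
  have hhalf (n : ℕ) : (n + 2) / 2 = n / 2 + 1 := by omega
  simp only [mcmullen, add_right_comm d 2, hhalf]
  rw [hpascal _ (by omega), hpascal _ (by omega)]
  ring

section Generating

variable {R : Type*}

/-- The generating function of McMullen's bounds for fixed `k`. It runs over `0 ≤ d ≤ k` rather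
than `2 ≤ d < k` because the longer sum satisfies a homogeneous linear recurrence in `k`. -/
def mcmullenSum [CommSemiring R] (x : R) (k : ℕ) : R :=
  ∑ d ∈ range (k + 1), x ^ d * (mcmullen d k : R)

theorem mcmullenSum_add_two [CommSemiring R] (x : R) (k : ℕ) :
    mcmullenSum x (k + 2) = mcmullenSum x (k + 1) + x ^ 2 * mcmullenSum x k := by
  have hpascal : ∑ d ∈ range k, x ^ (d + 2) * (mcmullen (d + 2) (k + 2) : R) =
      ∑ d ∈ range k, x ^ (d + 2) * (mcmullen (d + 2) (k + 1) : R) +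
        x ^ 2 * ∑ d ∈ range k, x ^ d * (mcmullen d k : R) := by
    rw [mul_sum, ← sum_add_distrib]
    refine sum_congr rfl fun d hd => ?_
    rw [mcmullen_add_two_add_two (mem_range.1 hd)]
    push_cast
    ring
  have htop : mcmullenSum x (k + 2) =
      ∑ d ∈ range k, x ^ (d + 2) * (mcmullen (d + 2) (k + 2) : R) +
        2 * x ^ (k + 2) + 2 * x + 1 := by
    simp [mcmullenSum, sum_range_succ' _ (k + 2), sum_range_succ' _ (k + 1), sum_range_succ _ k,
      mcmullen_self, mcmullen_one_succ, mcmullen_zero_succ, mul_comm]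
  have hmid : mcmullenSum x (k + 1) =
      ∑ d ∈ range k, x ^ (d + 2) * (mcmullen (d + 2) (k + 1) : R) + 2 * x + 1 := by
    simp [mcmullenSum, sum_range_succ' _ (k + 1), sum_range_succ' _ k,
      mcmullen_one_succ, mcmullen_zero_succ, mul_comm]
  have hbot : mcmullenSum x k = ∑ d ∈ range k, x ^ d * (mcmullen d k : R) + 2 * x ^ k := by
    simp [mcmullenSum, sum_range_succ _ k, mcmullen_self, mul_comm]
  rw [htop, hmid, hbot, hpascal]
  ring

theorem mcmullenSum_eq_sum_Icc_add [CommSemiring R] (x : R) {k : ℕ} (hk : 2 ≤ k) :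
    mcmullenSum x k =
      ∑ d ∈ Icc 2 (k - 1), x ^ d * (mcmullen d k : R) + (1 + 2 * x + 2 * x ^ k) := by
  obtain ⟨j, rfl⟩ := Nat.exists_eq_add_of_le' hk
  have hIcc : Icc 2 (j + 2 - 1) = Ico 2 (j + 2) := (Ico_add_one_right_eq_Icc 2 (j + 1)).symm
  rw [mcmullenSum, sum_range_succ, range_eq_Ico, sum_eq_sum_Ico_succ_bot (by omega),
    sum_eq_sum_Ico_succ_bot (by omega), hIcc, mcmullen_self, mcmullen_zero_succ, zero_add,
    mcmullen_one_succ]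
  push_cast
  ring

theorem sub_mul_mcmullenSum [CommRing R] {x φ ψ : R} (hadd : φ + ψ = 1) (hmul : φ * ψ = -x ^ 2)
    (k : ℕ) :
    (φ - ψ) * mcmullenSum x k = (φ - ψ + 2 * x) * φ ^ k + (φ - ψ - 2 * x) * ψ ^ k := by
  have hφ : φ ^ 2 = φ + x ^ 2 := by linear_combination φ * hadd - hmul
  have hψ : ψ ^ 2 = ψ + x ^ 2 := by linear_combination ψ * hadd - hmul
  induction k using Nat.twoStepInduction with
  | zero =>
    simp only [mcmullenSum, zero_add, sum_range_one, mcmullen_self, pow_zero]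
    push_cast
    ring
  | one =>
    have hone : mcmullenSum x 1 = 1 + 2 * x := by
      simp [mcmullenSum, sum_range_succ, mcmullen_self, mcmullen_zero_succ, mul_comm]
    rw [hone]
    linear_combination -(φ - ψ) * hadd
  | more k ih₀ ih₁ =>
    rw [mcmullenSum_add_two]
    linear_combination ih₁ + x ^ 2 * ih₀ - (φ - ψ + 2 * x) * φ ^ k * hφ -
      (φ - ψ - 2 * x) * ψ ^ k * hψ

end Generating

theorem abs_two_mul_lt_sqrt_one_add_four_mul_sq (α : ℝ) : |2 * α| < √(1 + 4 * α ^ 2) :=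
  Real.lt_sqrt_of_sq_lt (by rw [sq_abs]; linarith)

/-- The dominant root of `X ^ 2 - X - α ^ 2`, which is the growth rate of `mcmullenSum α`. -/
noncomputable def mcmullenRoot (α : ℝ) : ℝ := (1 + √(1 + 4 * α ^ 2)) / 2

/-- The other root of `X ^ 2 - X - α ^ 2`. -/
noncomputable def mcmullenConj (α : ℝ) : ℝ := (1 - √(1 + 4 * α ^ 2)) / 2

theorem mcmullenRoot_add_mcmullenConj (α : ℝ) : mcmullenRoot α + mcmullenConj α = 1 := by
  unfold mcmullenRoot mcmullenConj
  ring

theorem mcmullenRoot_sub_mcmullenConj (α : ℝ) :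
    mcmullenRoot α - mcmullenConj α = √(1 + 4 * α ^ 2) := by
  unfold mcmullenRoot mcmullenConj
  ring

theorem mcmullenRoot_mul_mcmullenConj (α : ℝ) : mcmullenRoot α * mcmullenConj α = -α ^ 2 := by
  have hsq : √(1 + 4 * α ^ 2) ^ 2 = 1 + 4 * α ^ 2 := Real.sq_sqrt (by positivity)
  unfold mcmullenRoot mcmullenConj
  linear_combination -hsq / 4

theorem one_lt_mcmullenRoot {α : ℝ} (hα : α ≠ 0) : 1 < mcmullenRoot α := by
  have hs : 1 < √(1 + 4 * α ^ 2) := Real.lt_sqrt_of_sq_lt (by nlinarith [sq_pos_of_ne_zero hα])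
  unfold mcmullenRoot
  linarith

theorem abs_lt_mcmullenRoot (α : ℝ) : |α| < mcmullenRoot α := by
  have hs := abs_two_mul_lt_sqrt_one_add_four_mul_sq α
  rw [abs_mul, abs_two] at hs
  unfold mcmullenRoot
  linarith

theorem mcmullenRoot_pos (α : ℝ) : 0 < mcmullenRoot α :=
  (abs_nonneg α).trans_lt (abs_lt_mcmullenRoot α)

theorem abs_mcmullenConj_lt_mcmullenRoot (α : ℝ) : |mcmullenConj α| < mcmullenRoot α := by
  have hs : 0 < √(1 + 4 * α ^ 2) := by positivity
  unfold mcmullenRoot mcmullenConj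
  exact abs_lt.2 ⟨by linarith, by linarith⟩

/-- The coefficient of `mcmullenRoot α ^ k` in the closed form of `mcmullenSum α k`. -/
noncomputable def mcmullenCoeff (α : ℝ) : ℝ := 1 + 2 * α / √(1 + 4 * α ^ 2)

theorem mcmullenCoeff_pos (α : ℝ) : 0 < mcmullenCoeff α := by
  have hs : 0 < √(1 + 4 * α ^ 2) := by positivity
  have hneg : -1 < 2 * α / √(1 + 4 * α ^ 2) := by
    rw [lt_div_iff₀ hs, neg_one_mul]
    exact (abs_lt.1 (abs_two_mul_lt_sqrt_one_add_four_mul_sq α)).1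
  unfold mcmullenCoeff
  linarith

theorem mcmullenSum_eq (α : ℝ) (k : ℕ) :
    mcmullenSum α k =
      mcmullenCoeff α * mcmullenRoot α ^ k + mcmullenCoeff (-α) * mcmullenConj α ^ k := by
  have hs : √(1 + 4 * α ^ 2) ≠ 0 := by positivity
  have hclosed := sub_mul_mcmullenSum (mcmullenRoot_add_mcmullenConj α)
    (mcmullenRoot_mul_mcmullenConj α) k
  rw [mcmullenRoot_sub_mcmullenConj] at hclosed
  apply mul_left_cancel₀ hs
  rw [hclosed, mcmullenCoeff, mcmullenCoeff, neg_sq]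
  field_simp
  ring

theorem isEquivalent_sum_mcmullen {α : ℝ} (hα : α ≠ 0) :
    (fun k : ℕ => ∑ d ∈ Icc 2 (k - 1), α ^ d * (mcmullen d k : ℝ)) ~[atTop]
      fun k => mcmullenCoeff α * mcmullenRoot α ^ k := by
  have isLittleO_pow {a : ℝ} (ha : |a| < mcmullenRoot α) :
      (fun k : ℕ => a ^ k) =o[atTop] fun k => mcmullenRoot α ^ k :=
    isLittleO_pow_pow_of_abs_lt_left (ha.trans_le (le_abs_self _))
  have hconj := (isLittleO_pow (abs_mcmullenConj_lt_mcmullenRoot α)).const_mul_left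
    (mcmullenCoeff (-α))
  have hone := (isLittleO_pow (a := 1) (by simpa using one_lt_mcmullenRoot hα)).const_mul_left
    (1 + 2 * α)
  have hself := (isLittleO_pow (abs_lt_mcmullenRoot α)).const_mul_left 2
  have herror := ((hconj.sub hone).sub hself).const_mul_right (mcmullenCoeff_pos α).ne'
  refine herror.congr' ?_ .rfl
  filter_upwards [eventually_ge_atTop 2] with k hk
  have hsplit := mcmullenSum_eq_sum_Icc_add α hk
  rw [mcmullenSum_eq] at hsplit
  simp only [Pi.sub_apply, one_pow]
  linear_combination hsplit

theorem eventually_mul_le_and_le_mul_of_isEquivalent {ι : Type*} {l : Filter ι} {u v : ι → ℝ}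
    (huv : u ~[l] v) (hv : ∀ᶠ i in l, 0 ≤ v i) {ε : ℝ} (hε : 0 < ε) :
    ∀ᶠ i in l, (1 - ε) * v i ≤ u i ∧ u i ≤ (1 + ε) * v i := by
  filter_upwards [huv.isLittleO.def hε, hv] with i hdiff hvi
  rw [Pi.sub_apply, Real.norm_eq_abs, Real.norm_of_nonneg hvi, abs_le] at hdiff
  constructor <;> linarith

theorem stmt_8_general {α : ℝ} (hα : α ≠ 0) :
    ∃ c₁ c₂ : ℝ, 0 < c₁ ∧ 0 < c₂ ∧ ∃ K : ℕ, ∀ k : ℕ, K ≤ k →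
      c₁ * ((1 + Real.sqrt (1 + 4 * α ^ 2)) / 2) ^ k ≤
          ∑ d ∈ Finset.Icc 2 (k - 1), α ^ d * (mcmullen d k : ℝ) ∧
      ∑ d ∈ Finset.Icc 2 (k - 1), α ^ d * (mcmullen d k : ℝ) ≤
          c₂ * ((1 + Real.sqrt (1 + 4 * α ^ 2)) / 2) ^ k := by
  have hcoeff := mcmullenCoeff_pos α
  have hbounds := eventually_mul_le_and_le_mul_of_isEquivalent (isEquivalent_sum_mcmullen hα)
    (.of_forall fun k => (mul_pos hcoeff (pow_pos (mcmullenRoot_pos α) k)).le) one_half_pos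
  obtain ⟨K, hK⟩ := eventually_atTop.1 hbounds
  refine ⟨(1 - 1 / 2) * mcmullenCoeff α, (1 + 1 / 2) * mcmullenCoeff α, by linarith, by linarith,
    K, fun k hk => ?_⟩
  rw [mul_assoc, mul_assoc]
  exact hK k hk

theorem stmt_8 (α : ℝ) (hα₀ : 0 < α) (hα₁ : α ≤ 1) :
    ∃ c₁ c₂ : ℝ, 0 < c₁ ∧ 0 < c₂ ∧ ∃ K : ℕ, ∀ k : ℕ, K ≤ k → 2 < k →
      c₁ * ((1 + Real.sqrt (1 + 4 * α ^ 2)) / 2) ^ k ≤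
          ∑ d ∈ Finset.Icc 2 (k - 1), α ^ d * (mcmullen d k : ℝ) ∧
      ∑ d ∈ Finset.Icc 2 (k - 1), α ^ d * (mcmullen d k : ℝ) ≤
          c₂ * ((1 + Real.sqrt (1 + 4 * α ^ 2)) / 2) ^ k := by
  obtain ⟨c₁, c₂, hc₁, hc₂, K, hK⟩ := stmt_8_general hα₀.ne'
  exact ⟨c₁, c₂, hc₁, hc₂, K, fun k hk _ => hK k hk⟩
end

section
/- Let P ⊆ ℝ^{3n} be a set contained in the non-negative orthant, and let X ⊆ P be a set of points that are pairwise compatible (in particular every point of X satisfies the quadrilateral constraints). Then there exists a maximal admissible face F of P with X ⊆ F; that is, F is an exposed face of P all of whose points satisfy the quadrilateral constraints, X ⊆ F, and F is not strictly contained in any other exposed face of P all of whose points satisfy the quadrilateral constraints. -/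
/-- A point of `ℝ^{3n}` (coordinates indexed by tetrahedron `i` and
quadrilateral type `j`) satisfies the *quadrilateral constraints* if for each
`i` at most one of the three coordinates `x (i, j)` is non-zero. -/
def QuadOK {n : ℕ} (x : Fin n × Fin 3 → ℝ) : Prop :=
  ∀ i : Fin n, ∀ j j' : Fin 3, x (i, j) ≠ 0 → x (i, j') ≠ 0 → j = j'

/-- Two points `x, y` of `ℝ^{3n}` are *compatible* if for each `i` at most one
index `j` has `x (i, j) ≠ 0` or `y (i, j) ≠ 0`. -/
def Compat {n : ℕ} (x y : Fin n × Fin 3 → ℝ) : Prop :=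
  ∀ i : Fin n, ∀ j j' : Fin 3,
    (x (i, j) ≠ 0 ∨ y (i, j) ≠ 0) → (x (i, j') ≠ 0 ∨ y (i, j') ≠ 0) → j = j'

/-- The non-negative orthant of `ℝ^{3n}`. -/
def Orthant (n : ℕ) : Set (Fin n × Fin 3 → ℝ) := {x | ∀ p, 0 ≤ x p}

/-- An *admissible face* of `P`: an exposed face of `P` all of whose points
satisfy the quadrilateral constraints. -/
def AdmFace {n : ℕ} (P F : Set (Fin n × Fin 3 → ℝ)) : Prop :=
  IsExposed ℝ P F ∧ ∀ x ∈ F, QuadOK x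

/-- A *maximal admissible face* of `P`: an admissible face of `P` that is not
strictly contained in any other admissible face of `P`. -/
def MaxAdmFace {n : ℕ} (P F : Set (Fin n × Fin 3 → ℝ)) : Prop :=
  AdmFace P F ∧ ∀ G, AdmFace P G → ¬ F ⊂ G

/-!
The points of `P` supported on the union of the supports of the points of `X` form an exposed face:
as `P` lies in the non-negative orthant, they are, if there are any, the points of `P` minimizing
the sum of the remaining coordinates. Pairwise compatibility of `X` makes this face admissible. It
lies in a maximal admissible face although `P`, an arbitrary set, may have infinitely many exposed
faces: such a face is the intersection of `P` with its own affine span, and a finite-dimensional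
space has no infinite strictly increasing chain of affine subspaces.
-/

section AffineSubspace

variable {k V P : Type*} [Ring k] [AddCommGroup V] [Module k V] [AddTorsor V P]

theorem wellFoundedGT_affineSubspace [IsNoetherian k V] : WellFoundedGT (AffineSubspace k P) := by
  classical
  -- The empty subspace and a point both have direction `⊥`; the added bottom tells them apart.
  let extendedDirection : AffineSubspace k P → WithBot (Submodule k V) :=
    fun s ↦ if s = ⊥ then ⊥ else s.direction
  have strictMono_extendedDirection : StrictMono extendedDirection := by
    intro s t hst
    have ht : t ≠ ⊥ := hst.ne_bot
    by_cases hs : s = ⊥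
    · simp only [extendedDirection, if_pos hs, if_neg ht, WithBot.bot_lt_coe]
    · simpa only [extendedDirection, if_neg hs, if_neg ht, WithBot.coe_lt_coe] using
        AffineSubspace.direction_lt_of_nonempty hst ((AffineSubspace.nonempty_iff_ne_bot s).2 hs)
  exact strictMono_extendedDirection.wellFoundedGT

end AffineSubspace

section ExposedFaces

variable {𝕜 E : Type*} [TopologicalSpace 𝕜] [Ring 𝕜] [PartialOrder 𝕜] [TopologicalSpace E]

theorem isExposed_setOf_apply_eq [AddCommMonoid E] [Module 𝕜 E] {A : Set E}
    {l : StrongDual 𝕜 E} {c : 𝕜} (hl : ∀ x ∈ A, l x ≤ c) :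
    IsExposed 𝕜 A {x ∈ A | l x = c} := by
  rintro ⟨w, hwA, hwc⟩
  refine ⟨l, Set.ext fun x ↦ and_congr_right fun hxA ↦ ⟨fun hxc y hy ↦ ?_, fun hmax ↦ ?_⟩⟩
  · exact hxc ▸ hl y hy
  · exact (hl x hxA).antisymm (hwc ▸ hmax w hwA)

theorem isExposed_setOf_forall_mem_apply_eq [IsOrderedRing 𝕜] [ContinuousAdd 𝕜]
    [AddCommMonoid E] [Module 𝕜 E] {A : Set E} {ι : Type*} {s : Finset ι}
    {l : ι → StrongDual 𝕜 E} {c : ι → 𝕜} (hl : ∀ i ∈ s, ∀ x ∈ A, l i x ≤ c i) :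
    IsExposed 𝕜 A {x ∈ A | ∀ i ∈ s, l i x = c i} := by
  have hsum : ∀ x ∈ A, (∑ i ∈ s, l i) x ≤ ∑ i ∈ s, c i := fun x hx ↦ by
    simpa only [sum_apply] using Finset.sum_le_sum fun i hi ↦ hl i hi x hx
  convert! isExposed_setOf_apply_eq hsum using 1
  refine Set.ext fun x ↦ and_congr_right fun hx ↦ ?_
  rw [sum_apply, Finset.sum_eq_sum_iff_of_le fun i hi ↦ hl i hi x hx]

theorem isExposed_setOf_support_subset [IsOrderedRing 𝕜] [IsTopologicalRing 𝕜]
    {ι : Type*} [Finite ι] {A : Set (ι → 𝕜)} (hA : ∀ x ∈ A, 0 ≤ x) (s : Set ι) :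
    IsExposed 𝕜 A {x ∈ A | Function.support x ⊆ s} := by
  have hneg : ∀ i ∈ sᶜ.toFinite.toFinset, ∀ x ∈ A,
      (-ContinuousLinearMap.proj i : StrongDual 𝕜 (ι → 𝕜)) x ≤ 0 :=
    fun i _ x hx ↦ neg_nonpos.2 (hA x hx i)
  convert! isExposed_setOf_forall_mem_apply_eq hneg using 1
  refine Set.ext fun x ↦ and_congr_right fun _ ↦ ?_
  simp only [Set.Finite.mem_toFinset, Set.mem_compl_iff, neg_apply,
    ContinuousLinearMap.proj_apply, neg_eq_zero, Function.support_subset_iff']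

variable [AddCommGroup E] [Module 𝕜 E] {A F : Set E}

theorem inter_affineSpan_eq_of_isExposed (hF : IsExposed 𝕜 A F) : A ∩ affineSpan 𝕜 F = F := by
  refine Set.Subset.antisymm ?_ (Set.subset_inter hF.subset (subset_affineSpan 𝕜 F))
  rcases F.eq_empty_or_nonempty with rfl | ⟨w, hw⟩
  · simp
  obtain ⟨l, rfl⟩ := hF ⟨w, hw⟩
  rintro x ⟨hxA, hx⟩
  have hlx : l x = l w :=
    AffineMap.eqOn_affineSpan (f := l.toLinearMap.toAffineMap) (g := AffineMap.const 𝕜 E (l w))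
      (fun y hy ↦ (hw.2 y hy.1).antisymm (hy.2 w hw.1)) hx
  exact ⟨hxA, fun y hy ↦ hlx ▸ hw.2 y hy⟩

theorem affineSpan_le_affineSpan_iff_of_isExposed {G : Set E} (hF : IsExposed 𝕜 A F)
    (hG : IsExposed 𝕜 A G) : affineSpan 𝕜 F ≤ affineSpan 𝕜 G ↔ F ⊆ G := by
  refine ⟨fun h ↦ ?_, affineSpan_mono 𝕜⟩
  rw [← inter_affineSpan_eq_of_isExposed hF, ← inter_affineSpan_eq_of_isExposed hG]
  exact Set.inter_subset_inter_right A h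

theorem wellFoundedGT_isExposed [IsNoetherian 𝕜 E] (A : Set E) :
    WellFoundedGT {F : Set E // IsExposed 𝕜 A F} :=
  have : WellFoundedGT (AffineSubspace 𝕜 E) := wellFoundedGT_affineSubspace
  have strictMono_affineSpan : StrictMono fun F : {F // IsExposed 𝕜 A F} ↦ affineSpan 𝕜 F.1 :=
    strictMono_of_le_iff_le fun F G ↦ (affineSpan_le_affineSpan_iff_of_isExposed F.2 G.2).symm
  strictMono_affineSpan.wellFoundedGT

end ExposedFaces

section AdmissibleFaces

variable {n : ℕ} {P X F : Set (Fin n × Fin 3 → ℝ)}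

theorem quadOK_of_support_subset {x : Fin n × Fin 3 → ℝ}
    (hX : ∀ y ∈ X, ∀ z ∈ X, Compat y z)
    (hx : Function.support x ⊆ ⋃ y ∈ X, Function.support y) : QuadOK x := by
  intro i j j' hj hj'
  obtain ⟨y, hyX, hy⟩ := Set.mem_iUnion₂.1 (hx hj)
  obtain ⟨z, hzX, hz⟩ := Set.mem_iUnion₂.1 (hx hj')
  exact hX y hyX z hzX i j j' (.inl hy) (.inr hz)

theorem admFace_setOf_support_subset (hP : P ⊆ Orthant n)
    (hX : ∀ x ∈ X, ∀ y ∈ X, Compat x y) :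
    AdmFace P {x ∈ P | Function.support x ⊆ ⋃ y ∈ X, Function.support y} :=
  ⟨isExposed_setOf_support_subset hP _, fun _ hx ↦ quadOK_of_support_subset hX hx.2⟩

theorem AdmFace.exists_maxAdmFace_superset (hF : AdmFace P F) : ∃ G, MaxAdmFace P G ∧ F ⊆ G := by
  have := wellFoundedGT_isExposed (𝕜 := ℝ) P
  obtain ⟨G, hFG, hG⟩ := exists_maximal_ge_of_wellFoundedGT
    (fun G : {G // IsExposed ℝ P G} ↦ ∀ x ∈ G.1, QuadOK x) ⟨F, hF.1⟩ hF.2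
  exact ⟨G, ⟨⟨G.2, hG.prop⟩, fun H hH hGH ↦ hG.not_prop_of_gt (y := ⟨H, hH.1⟩) hGH hH.2⟩, hFG⟩

end AdmissibleFaces

theorem stmt_11 {n : ℕ} (hn : 1 ≤ n) (P : Set (Fin n × Fin 3 → ℝ))
    (horth : P ⊆ Orthant n) (X : Set (Fin n × Fin 3 → ℝ)) (hXP : X ⊆ P)
    (hcompat : ∀ x ∈ X, ∀ y ∈ X, Compat x y) :
    ∃ F : Set (Fin n × Fin 3 → ℝ), MaxAdmFace P F ∧ X ⊆ F := by
  obtain ⟨F, hF, hsub⟩ := (admFace_setOf_support_subset horth hcompat).exists_maxAdmFace_superset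
  exact ⟨F, hF, fun x hx ↦ hsub ⟨hXP hx, Set.subset_biUnion_of_mem hx⟩⟩
end

section
/- Let P ⊆ ℝ^{3n} be a convex set contained in the non-negative orthant, and let F be an admissible face of P. Then F is a maximal admissible face of P if and only if there is no point x ∈ P \ F that satisfies the quadrilateral constraints and is compatible with every point of F. -/
/-!
Let `K` be the simplicial complex of supports allowed by the constraints. In the non-negative
orthant the support of a midpoint is the union of the supports of the endpoints, so any two points
of an admissible face are compatible, and a non-empty convex set has a point whose support contains
all the others. If `x ∈ P \ F` is compatible with that point of `F`, then the union `S` of the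
two supports lies in `K`, and the points of `P` supported in `S` form a strictly larger admissible
face: it is exposed by minus the sum of the coordinates outside `S`.
-/

open Function Set

section Support

variable {ι 𝕜 : Type*}

theorem support_add_eq_union_of_nonneg [AddCommMonoid 𝕜] [PartialOrder 𝕜] [IsOrderedAddMonoid 𝕜]
    {x y : ι → 𝕜} (hx : 0 ≤ x) (hy : 0 ≤ y) : support (x + y) = support x ∪ support y := by
  ext i
  simp only [mem_support, mem_union, Pi.add_apply, ne_eq,
    add_eq_zero_iff_of_nonneg (hx i) (hy i), not_and_or]

variable [Field 𝕜] [LinearOrder 𝕜] [IsStrictOrderedRing 𝕜] {C : Set (ι → 𝕜)}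

theorem exists_mem_support_eq_union (hC : Convex 𝕜 C) (hC₀ : C ⊆ Ici 0) {x y : ι → 𝕜}
    (hx : x ∈ C) (hy : y ∈ C) : ∃ z ∈ C, support z = support x ∪ support y := by
  refine ⟨midpoint 𝕜 x y, hC.midpoint_mem hx hy, ?_⟩
  rw [midpoint_eq_smul_add, support_const_smul_of_ne_zero _ _ (Invertible.ne_zero (⅟2 : 𝕜)),
    support_add_eq_union_of_nonneg (hC₀ hx) (hC₀ hy)]

theorem exists_mem_forall_support_subset [Finite ι] (hC : Convex 𝕜 C) (hC₀ : C ⊆ Ici 0)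
    (hne : C.Nonempty) : ∃ z ∈ C, ∀ y ∈ C, support y ⊆ support z := by
  obtain ⟨z, hz, hmax⟩ := exists_maximalFor_of_wellFoundedGT (· ∈ C) support hne
  refine ⟨z, hz, fun y hy => ?_⟩
  obtain ⟨w, hw, hw_supp⟩ := exists_mem_support_eq_union hC hC₀ hz hy
  calc support y ⊆ support w := hw_supp ▸ subset_union_right
    _ ⊆ support z := hmax hw (hw_supp ▸ subset_union_left)

theorem exists_mem_support_subset_of_forall_union_mem [Finite ι] {K : Set (Set ι)}
    (hC : Convex 𝕜 C) (hC₀ : C ⊆ Ici 0) {x : ι → 𝕜} (hx : support x ∈ K)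
    (hxC : ∀ y ∈ C, support x ∪ support y ∈ K) :
    ∃ S ∈ K, support x ⊆ S ∧ ∀ y ∈ C, support y ⊆ S := by
  rcases C.eq_empty_or_nonempty with rfl | hne
  · exact ⟨support x, hx, Subset.rfl, fun _ hy => hy.elim⟩
  · obtain ⟨z, hz, hz_top⟩ := exists_mem_forall_support_subset hC hC₀ hne
    exact ⟨support x ∪ support z, hxC z hz, subset_union_left,
      fun y hy => (hz_top y hy).trans subset_union_right⟩

end Support

theorem isExposed_setOf_support_subset_s13 {ι 𝕜 : Type*} [Finite ι] [Ring 𝕜] [PartialOrder 𝕜]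
    [IsOrderedAddMonoid 𝕜] [TopologicalSpace 𝕜] [IsTopologicalAddGroup 𝕜] {P : Set (ι → 𝕜)}
    (hP₀ : P ⊆ Ici 0) (S : Set ι) : IsExposed 𝕜 P {x ∈ P | support x ⊆ S} := by
  classical
  have := Fintype.ofFinite ι
  rintro ⟨x₀, hx₀, hx₀S⟩
  let outside (x : ι → 𝕜) : 𝕜 := ∑ i with i ∉ S, x i
  have outside_nonneg {x} (hx : x ∈ P) : 0 ≤ outside x :=
    Finset.sum_nonneg fun i _ => hP₀ hx i
  have outside_eq_zero_iff {x} (hx : x ∈ P) : outside x = 0 ↔ support x ⊆ S := by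
    rw [Finset.sum_eq_zero_iff_of_nonneg fun i _ => hP₀ hx i, support_subset_iff']
    simp only [Finset.mem_filter_univ]
  let l : StrongDual 𝕜 (ι → 𝕜) :=
    -∑ i with i ∉ S, ContinuousLinearMap.proj (R := 𝕜) (φ := fun _ : ι => 𝕜) i
  have l_apply (x) : l x = -outside x := by simp [l, outside]
  refine ⟨l, Set.ext fun x => and_congr_right fun hx => ?_⟩
  simp only [l_apply, neg_le_neg_iff, ← outside_eq_zero_iff hx]
  constructor
  · intro hx_zero y hy
    exact hx_zero ▸ outside_nonneg hy
  · intro hx_min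
    have hx_le : outside x ≤ 0 := (outside_eq_zero_iff hx₀).2 hx₀S ▸ hx_min x₀ hx₀
    exact hx_le.antisymm (outside_nonneg hx)

section AdmissibleFace

variable {ι 𝕜 : Type*} [TopologicalSpace 𝕜]

/-- `F` is an exposed face of `P` all of whose points have support in `K`. The set system `K`
encodes the admissibility constraint; for the quadrilateral constraints it consists of the sets
of coordinates that contain at most one quadrilateral type in each tetrahedron. -/
def IsAdmissibleFace [Semiring 𝕜] [Preorder 𝕜] (K : Set (Set ι)) (P F : Set (ι → 𝕜)) : Prop :=
  IsExposed 𝕜 P F ∧ ∀ x ∈ F, support x ∈ K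

variable {K : Set (Set ι)} {P F : Set (ι → 𝕜)}

theorem isAdmissibleFace_setOf_support_subset [Finite ι] [Ring 𝕜] [PartialOrder 𝕜]
    [IsOrderedAddMonoid 𝕜] [IsTopologicalAddGroup 𝕜]
    (hK : IsLowerSet K) (hP₀ : P ⊆ Ici 0) {S : Set ι} (hS : S ∈ K) :
    IsAdmissibleFace K P {x ∈ P | support x ⊆ S} :=
  ⟨isExposed_setOf_support_subset_s13 hP₀ S, fun _ hx => hK hx.2 hS⟩

variable [Field 𝕜] [LinearOrder 𝕜] [IsStrictOrderedRing 𝕜]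

theorem IsAdmissibleFace.support_union_mem (hF : IsAdmissibleFace K P F) (hP : Convex 𝕜 P)
    (hP₀ : P ⊆ Ici 0) {x y : ι → 𝕜} (hx : x ∈ F) (hy : y ∈ F) : support x ∪ support y ∈ K := by
  obtain ⟨z, hz, hz_supp⟩ :=
    exists_mem_support_eq_union (hF.1.convex hP) (hF.1.subset.trans hP₀) hx hy
  exact hz_supp ▸ hF.2 z hz

theorem stmt_13_general [Finite ι] [IsTopologicalAddGroup 𝕜] (hK : IsLowerSet K)
    (hP : Convex 𝕜 P) (hP₀ : P ⊆ Ici 0) (hF : IsAdmissibleFace K P F) :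
    Maximal (IsAdmissibleFace K P) F ↔
      ¬ ∃ x ∈ P \ F, support x ∈ K ∧ ∀ y ∈ F, support x ∪ support y ∈ K := by
  constructor
  · rintro hmax ⟨x, ⟨hxP, hxF⟩, hx, hxy⟩
    obtain ⟨S, hS, hxS, hFS⟩ := exists_mem_support_subset_of_forall_union_mem
      (hF.1.convex hP) (hF.1.subset.trans hP₀) hx hxy
    have hG := isAdmissibleFace_setOf_support_subset hK hP₀ hS
    exact hxF (hmax.le_of_ge hG (fun y hy => ⟨hF.1.subset hy, hFS y hy⟩) ⟨hxP, hxS⟩)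
  · refine fun hno => ⟨hF, fun G hG hFG x hx => ?_⟩
    by_contra hxF
    exact hno ⟨x, ⟨hG.1.subset hx, hxF⟩, hG.2 x hx,
      fun y hy => hG.support_union_mem hP hP₀ hx (hFG hy)⟩

end AdmissibleFace

theorem injOn_fst_iff {α β : Type*} {S : Set (α × β)} :
    InjOn Prod.fst S ↔ ∀ i j j', (i, j) ∈ S → (i, j') ∈ S → j = j' := by
  constructor
  · intro h i j j' hj hj'
    exact congrArg Prod.snd (h hj hj' rfl)
  · rintro h ⟨i, j⟩ hj ⟨_, j'⟩ hj' rfl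
    exact congrArg (Prod.mk i) (h i j j' hj hj')

section Quadrilateral

variable {n : ℕ}

theorem quadOK_iff_injOn_support {x : Fin n × Fin 3 → ℝ} :
    QuadOK x ↔ InjOn Prod.fst (support x) :=
  (injOn_fst_iff (S := support x)).symm

theorem compat_iff_injOn_support_union {x y : Fin n × Fin 3 → ℝ} :
    Compat x y ↔ InjOn Prod.fst (support x ∪ support y) :=
  (injOn_fst_iff (S := support x ∪ support y)).symm

theorem admFace_iff_isAdmissibleFace {P F : Set (Fin n × Fin 3 → ℝ)} :
    AdmFace P F ↔ IsAdmissibleFace {S | InjOn Prod.fst S} P F := by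
  simp only [AdmFace, IsAdmissibleFace, quadOK_iff_injOn_support, mem_ofPred_eq]

theorem maxAdmFace_iff_maximal {P F : Set (Fin n × Fin 3 → ℝ)} :
    MaxAdmFace P F ↔ Maximal (IsAdmissibleFace {S | InjOn Prod.fst S} P) F := by
  simp only [MaxAdmFace, maximal_iff_forall_gt, admFace_iff_isAdmissibleFace, imp_not_comm]

end Quadrilateral

theorem stmt_13 {n : ℕ} (hn : 1 ≤ n) (P : Set (Fin n × Fin 3 → ℝ))
    (hconv : Convex ℝ P) (horth : P ⊆ Orthant n)
    (F : Set (Fin n × Fin 3 → ℝ)) (hF : AdmFace P F) :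
    MaxAdmFace P F ↔
      ¬ ∃ x, x ∈ P \ F ∧ QuadOK x ∧ ∀ y ∈ F, Compat x y := by
  simpa only [maxAdmFace_iff_maximal, quadOK_iff_injOn_support, compat_iff_injOn_support_union,
    mem_ofPred_eq] using stmt_13_general (fun _ _ hST hS => hS.mono hST)
      hconv horth (admFace_iff_isAdmissibleFace.1 hF)
end

section
/- Let P ⊆ ℝ^{3n} be a convex set contained in the non-negative orthant, and let X ⊆ P. Then X is a maximal admissible face of P if and only if X is a maximal subset of P consisting of pairwise compatible points; here 'maximal' means maximal under set inclusion (there is no strictly larger subset of P of the same kind). -/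
/-!
On the non-negative orthant no cancellation occurs, so the midpoint of two points is supported on
the union of their supports. Hence any two points of an admissible face are compatible. Conversely,
if the points of `X ⊆ P` are pairwise compatible, then the points of `P` supported on the union of
the supports of the points of `X` form an admissible face containing `X`, exposed by minus the sum
of the remaining coordinates. So admissible faces are pairwise compatible sets, and every pairwise
compatible set lies in an admissible face; the two families have the same maximal members.
-/

open Function

section Exposed

variable {𝕜 E : Type*} [Ring 𝕜] [PartialOrder 𝕜] [IsOrderedAddMonoid 𝕜] [TopologicalSpace 𝕜]
  [IsTopologicalAddGroup 𝕜] [AddCommGroup E] [TopologicalSpace E] [Module 𝕜 E]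

theorem isExposed_setOf_eq_zero_of_nonneg {P : Set E} (l : StrongDual 𝕜 E)
    (hl : ∀ x ∈ P, 0 ≤ l x) : IsExposed 𝕜 P {x ∈ P | l x = 0} := by
  rintro ⟨w, hwP, hw⟩
  refine ⟨-l, Set.ext fun x => and_congr_right fun hx => ?_⟩
  simp only [neg_apply, neg_le_neg_iff]
  exact ⟨fun h y hy => h.trans_le (hl y hy), fun h => ((h w hwP).trans_eq hw).antisymm (hl x hx)⟩

end Exposed

section CoordinateFace

variable {ι 𝕜 : Type*}

/-- The coordinate face of `P` on a set `S` of indices: the points of `P` whose coordinates outside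
`S` vanish. It is a face when `P` lies in the non-negative orthant. -/
def coordinateFace [Zero 𝕜] (P : Set (ι → 𝕜)) (S : Set ι) : Set (ι → 𝕜) :=
  {x ∈ P | support x ⊆ S}

theorem subset_coordinateFace_iUnion_support [Zero 𝕜] {P X : Set (ι → 𝕜)} (hXP : X ⊆ P) :
    X ⊆ coordinateFace P (⋃ x ∈ X, support x) :=
  fun _ hx => ⟨hXP hx, Set.subset_biUnion_of_mem (u := support) hx⟩

theorem isExposed_coordinateFace [Finite ι] [Ring 𝕜] [PartialOrder 𝕜] [IsOrderedAddMonoid 𝕜]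
    [TopologicalSpace 𝕜] [IsTopologicalAddGroup 𝕜] {P : Set (ι → 𝕜)} (hP : P ⊆ Set.Ici 0)
    (S : Set ι) : IsExposed 𝕜 P (coordinateFace P S) := by
  classical
  have := Fintype.ofFinite ι
  let l : StrongDual 𝕜 (ι → 𝕜) := ∑ i with i ∉ S, ContinuousLinearMap.proj i
  have l_apply (x : ι → 𝕜) : l x = ∑ i with i ∉ S, x i := by simp [l]
  have l_nonneg : ∀ x ∈ P, 0 ≤ l x := fun x hx => by
    rw [l_apply]
    exact Finset.sum_nonneg fun i _ => hP hx i
  have l_eq_zero_iff : ∀ x ∈ P, (l x = 0 ↔ support x ⊆ S) := fun x hx => by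
    rw [l_apply, Finset.sum_eq_zero_iff_of_nonneg fun i _ => hP hx i, support_subset_iff']
    simp only [Finset.mem_filter_univ]
  have face_eq : coordinateFace P S = {x ∈ P | l x = 0} :=
    Set.ext fun x => and_congr_right fun hx => (l_eq_zero_iff x hx).symm
  exact face_eq ▸ isExposed_setOf_eq_zero_of_nonneg l l_nonneg

end CoordinateFace

section Support

variable {ι 𝕜 : Type*}

theorem support_add_of_nonneg [AddZeroClass 𝕜] [PartialOrder 𝕜] [AddLeftMono 𝕜] [AddRightMono 𝕜]
    {x y : ι → 𝕜} (hx : 0 ≤ x) (hy : 0 ≤ y) : support (x + y) = support x ∪ support y := by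
  ext i
  simp only [mem_support, Set.mem_union, Pi.add_apply, ne_eq,
    add_eq_zero_iff_of_nonneg (hx i) (hy i), not_and_or]

theorem support_midpoint_of_nonneg [Field 𝕜] [LinearOrder 𝕜] [IsStrictOrderedRing 𝕜]
    {x y : ι → 𝕜} (hx : 0 ≤ x) (hy : 0 ≤ y) :
    support (midpoint 𝕜 x y) = support x ∪ support y := by
  rw [midpoint_eq_smul_add, support_const_smul_of_ne_zero _ _ (Invertible.ne_zero _),
    support_add_of_nonneg hx hy]

theorem pairwise_biUnion_iff_pairwise_union {α : Type*} {X : Set α} {f : α → Set ι}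
    {r : ι → ι → Prop} :
    (⋃ x ∈ X, f x).Pairwise r ↔ ∀ x ∈ X, ∀ y ∈ X, (f x ∪ f y).Pairwise r := by
  refine ⟨fun h x hx y hy => h.mono (Set.union_subset (Set.subset_biUnion_of_mem hx)
    (Set.subset_biUnion_of_mem hy)), fun h i hi j hj => ?_⟩
  obtain ⟨x, hx, hix⟩ := Set.mem_iUnion₂.1 hi
  obtain ⟨y, hy, hjy⟩ := Set.mem_iUnion₂.1 hj
  exact h x hx y hy (Or.inl hix) (Or.inr hjy)

end Support

section General

variable {ι 𝕜 : Type*} [Field 𝕜] [LinearOrder 𝕜] [IsStrictOrderedRing 𝕜]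

theorem pairwise_support_union_of_convex {F : Set (ι → 𝕜)} (hF : Convex 𝕜 F) (hF₀ : F ⊆ Set.Ici 0)
    {r : ι → ι → Prop} (hr : ∀ x ∈ F, (support x).Pairwise r) :
    ∀ x ∈ F, ∀ y ∈ F, (support x ∪ support y).Pairwise r := fun _ hx _ hy =>
  support_midpoint_of_nonneg (hF₀ hx) (hF₀ hy) ▸ hr _ (hF.midpoint_mem hx hy)

/-- Here `r i j` says that the coordinates `i` and `j` may both be non-zero; for the quadrilateral
constraints this means that they belong to different tetrahedra. -/
theorem stmt_14_general [Finite ι] [TopologicalSpace 𝕜] [IsTopologicalAddGroup 𝕜]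
    (r : ι → ι → Prop) {P : Set (ι → 𝕜)} (hconv : Convex 𝕜 P) (hP : P ⊆ Set.Ici 0)
    (X : Set (ι → 𝕜)) :
    Maximal (fun F => IsExposed 𝕜 P F ∧ ∀ x ∈ F, (support x).Pairwise r) X ↔
      Maximal (fun Y => Y ⊆ P ∧ ∀ x ∈ Y, ∀ y ∈ Y, (support x ∪ support y).Pairwise r) X := by
  refine (maximal_iff_maximal_of_imp_of_forall ?_ ?_).symm
  · rintro F ⟨hF, hr⟩
    exact ⟨hF.subset, pairwise_support_union_of_convex (hF.convex hconv) (hF.subset.trans hP) hr⟩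
  · rintro Y ⟨hYP, hY⟩
    exact ⟨coordinateFace P (⋃ y ∈ Y, support y), subset_coordinateFace_iUnion_support hYP,
      isExposed_coordinateFace hP _,
      fun x hx => (pairwise_biUnion_iff_pairwise_union.2 hY).mono hx.2⟩

end General

section Quadrilateral

variable {n : ℕ}

theorem pairwise_fst_ne_iff_forall_eq {α β : Type*} {s : Set (α × β)} :
    (s.Pairwise fun p q => p.1 ≠ q.1) ↔ ∀ i j j', (i, j) ∈ s → (i, j') ∈ s → j = j' := by
  rw [← Set.injOn_iff_pairwise_ne]
  constructor
  · exact fun h i j j' hj hj' => congrArg Prod.snd (h hj hj' rfl)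
  · rintro h ⟨i, j⟩ hj ⟨_, j'⟩ hj' rfl
    rw [h i j j' hj hj']

theorem quadOK_iff_pairwise_support {x : Fin n × Fin 3 → ℝ} :
    QuadOK x ↔ (support x).Pairwise fun p q => p.1 ≠ q.1 :=
  (pairwise_fst_ne_iff_forall_eq (s := support x)).symm

theorem compat_iff_pairwise_support_union {x y : Fin n × Fin 3 → ℝ} :
    Compat x y ↔ (support x ∪ support y).Pairwise fun p q => p.1 ≠ q.1 :=
  (pairwise_fst_ne_iff_forall_eq (s := support x ∪ support y)).symm

theorem maxAdmFace_iff_maximal_s14 {P X : Set (Fin n × Fin 3 → ℝ)} :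
    MaxAdmFace P X ↔ Maximal
      (fun F => IsExposed ℝ P F ∧ ∀ x ∈ F, (support x).Pairwise fun p q => p.1 ≠ q.1) X := by
  simp only [MaxAdmFace, AdmFace, Set.maximal_iff_forall_ssuperset, quadOK_iff_pairwise_support,
    imp_not_comm]

theorem maximal_pairwise_compat_iff {P X : Set (Fin n × Fin 3 → ℝ)} (hXP : X ⊆ P) :
    Maximal (fun Y => Y ⊆ P ∧
        ∀ x ∈ Y, ∀ y ∈ Y, (support x ∪ support y).Pairwise fun p q => p.1 ≠ q.1) X ↔
      (∀ x ∈ X, ∀ y ∈ X, Compat x y) ∧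
        ∀ Y ⊆ P, (∀ x ∈ Y, ∀ y ∈ Y, Compat x y) → ¬ X ⊂ Y := by
  simp only [Set.maximal_iff_forall_ssuperset, compat_iff_pairwise_support_union, hXP, true_and,
    not_and]
  exact and_congr_right fun _ => forall_congr' fun Y =>
    ⟨fun h hYP hY hXY => h hXY hYP hY, fun h hXY hYP hY => h hYP hY hXY⟩

end Quadrilateral

theorem stmt_14 {n : ℕ} (hn : 1 ≤ n) (P : Set (Fin n × Fin 3 → ℝ))
    (hconv : Convex ℝ P) (horth : P ⊆ Orthant n)
    (X : Set (Fin n × Fin 3 → ℝ)) (hXP : X ⊆ P) :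
    MaxAdmFace P X ↔
      (∀ x ∈ X, ∀ y ∈ X, Compat x y) ∧
        ∀ Y : Set (Fin n × Fin 3 → ℝ), Y ⊆ P →
          (∀ x ∈ Y, ∀ y ∈ Y, Compat x y) → ¬ X ⊂ Y := by
  rw [maxAdmFace_iff_maximal_s14, stmt_14_general _ hconv horth]
  exact maximal_pairwise_compat_iff hXP
end
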